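/- Let S ≥ 2 be an integer and let ε ∈ (0,1). Then there exists a unique u* ∈ (0,1) such that S·(1−u*)·(u*)^{S−1}/(1 − (u*)^S) = 1 − ε. -/

import Mathlib

/-!
Since `1 - u ^ S = (1 - u) * ∑ i < S, u ^ i`, the left-hand side equals
`S * u ^ (S - 1) / ∑ i < S, u ^ i` on `(0,1)`. This expression is continuous on `[0,1]`, takes the
values `0` and `1` at the endpoints, and is strictly increasing: its
reciprocal is `1 / S` times the sum of `u⁻¹ ^ j` over `j < S`, and `S ≥ 2`. Existence is then
the intermediate value theorem, and uniqueness is strict monotonicity.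
-/

open Finset in
/-- Strict monotonicity of `u ^ n / ∑ i ≤ n, u ^ i`, with denominators cleared; the comparison
`u ^ n * v ^ i ≤ v ^ n * u ^ i` holds termwise and is strict for `i = 0`. -/
lemma pow_mul_geom_sum_lt {n : ℕ} (hn : 1 ≤ n) {u v : ℝ} (hu : 0 < u) (huv : u < v) :
    u ^ n * ∑ i ∈ range (n + 1), v ^ i < v ^ n * ∑ i ∈ range (n + 1), u ^ i := by
  rw [mul_sum, mul_sum]
  refine sum_lt_sum (fun i hi => ?_) ⟨0, by simp, ?_⟩
  · obtain ⟨k, rfl⟩ := Nat.exists_eq_add_of_le (Nat.lt_succ_iff.mp (mem_range.mp hi))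
    have hk : u ^ k ≤ v ^ k := pow_le_pow_left₀ hu.le huv.le k
    have hpos : 0 ≤ u ^ i * v ^ i := by have := hu.trans huv; positivity
    calc u ^ (i + k) * v ^ i = u ^ i * v ^ i * u ^ k := by ring
      _ ≤ u ^ i * v ^ i * v ^ k := mul_le_mul_of_nonneg_left hk hpos
      _ = v ^ (i + k) * u ^ i := by ring
  · simpa using pow_lt_pow_left₀ huv hu.le (by omega)

open Finset in
lemma geom_sum_pos_of_nonneg (n : ℕ) {u : ℝ} (hu : 0 ≤ u) :
    0 < ∑ i ∈ range (n + 1), u ^ i := by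
  rw [sum_range_succ']
  have : 0 ≤ ∑ i ∈ range n, u ^ (i + 1) := sum_nonneg fun i _ => by positivity
  simp only [pow_zero]
  linarith

open Finset in
/-- Cancelling the factor `1 - u` from the numerator and from `1 - u ^ (n + 1)`. -/
lemma collision_eq_geom (n : ℕ) {u : ℝ} (hu : u < 1) (c : ℝ) :
    c * (1 - u) * u ^ n / (1 - u ^ (n + 1)) = c * u ^ n / ∑ i ∈ range (n + 1), u ^ i := by
  rw [← mul_neg_geom_sum u (n + 1), mul_right_comm, mul_comm (1 - u)]
  exact mul_div_mul_right _ _ (sub_pos.mpr hu).ne'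

/-- For an integer `S ≥ 2` and `ε ∈ (0,1)`, there is a unique `u* ∈ (0,1)` such
that `S (1-u*) (u*)^{S-1} / (1 - (u*)^S) = 1 - ε`. -/
theorem exists_unique_fixed_point (S : ℕ) (hS : 2 ≤ S) (ε : ℝ)
    (hε : ε ∈ Set.Ioo (0 : ℝ) 1) :
    ∃! u : ℝ, u ∈ Set.Ioo (0 : ℝ) 1 ∧
      (S : ℝ) * (1 - u) * u ^ (S - 1) / (1 - u ^ S) = 1 - ε := by
  obtain ⟨hε0, hε1⟩ := hε
  obtain ⟨n, rfl⟩ : ∃ n, S = n + 1 := ⟨S - 1, by omega⟩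
  have hn : 1 ≤ n := by omega
  simp only [Nat.add_sub_cancel]
  have hc : (0 : ℝ) < ((n + 1 : ℕ) : ℝ) := by positivity
  set c : ℝ := ((n + 1 : ℕ) : ℝ) with hcdef
  set f : ℝ → ℝ := fun u => c * u ^ n / ∑ i ∈ Finset.range (n + 1), u ^ i with hf
  have hmono : ∀ u v : ℝ, 0 < u → u < v → f u < f v := fun u v hu huv => by
    simp only [hf]
    rw [div_lt_div_iff₀ (geom_sum_pos_of_nonneg n hu.le)
      (geom_sum_pos_of_nonneg n (hu.trans huv).le), mul_assoc, mul_assoc]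
    exact mul_lt_mul_of_pos_left (pow_mul_geom_sum_lt hn hu huv) hc
  have hcont : ContinuousOn f (Set.Icc 0 1) :=
    ContinuousOn.div (by fun_prop) (by fun_prop)
      fun u hu => (geom_sum_pos_of_nonneg n hu.1).ne'
  have hf0 : f 0 = 0 := by simp [hf, show n ≠ 0 by omega]
  have hf1 : f 1 = 1 := by
    simp only [hf, one_pow, mul_one, Finset.sum_const, Finset.card_range, nsmul_eq_mul]
    exact div_self hc.ne'
  obtain ⟨u, hu, hfu⟩ := intermediate_value_Ioo zero_le_one hcont
    (show 1 - ε ∈ Set.Ioo (f 0) (f 1) by rw [hf0, hf1]; constructor <;> linarith)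
  refine ⟨u, ⟨hu, (collision_eq_geom n hu.2 c).trans hfu⟩, ?_⟩
  rintro v ⟨hv, hfv⟩
  rw [collision_eq_geom n hv.2 c] at hfv
  have heq : f v = f u := hfv.trans hfu.symm
  rcases lt_trichotomy v u with h | h | h
  · exact absurd heq (hmono v u hv.1 h).ne
  · exact h
  · exact absurd heq (hmono u v hu.1 h).ne'
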